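/- arXiv:2210.09577 — 5 statements merged into one kernel-verified Lean document; each statement's English description precedes it below -/
import Mathlib

section
/- Let G be a Moore graph of degree 57 and let x, y be adjacent vertices of G. Let Γ be the subgraph of G induced by the set of vertices at distance 2 (in G) from both x and y, and let Γ₃ be the graph whose vertices are the vertices of Γ, with two vertices adjacent in Γ₃ if and only if their distance in Γ equals 3. Then Γ₃ is isomorphic to the Cartesian (box) product of two copies of the complete graph K₅₆. -/
/-!
Write `S` for the vertex set of `Γ`. A vertex `v ∈ S` has a unique common neighbour `p v` with `x`
and a unique common neighbour `q v` with `y`; here `p v` lies in `A = N(x) \ {y}` and `q v` in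
`B = N(y) \ {x}`, two sets of size 56. Since `G` has girth 5, `a ∈ A` and `b ∈ B` are never equal
or adjacent, so they have a unique common neighbour, which lies in `S`; hence `v ↦ (p v, q v)` is a
bijection `S ≃ A × B`.

The neighbours of `v` outside `S` are exactly `p v` and `q v`. If two vertices of `S` differ in both
coordinates, they are adjacent or their common neighbour lies in `S`, so their distance in `Γ` is
at most 2. If they differ in exactly one coordinate, their only common neighbour in `G` is the shared
coordinate, outside `S`, so their distance in `Γ` is at least 3; a count of neighbours provides a
path of length 3 (`exists_path_three`). So distance 3 in `Γ` means agreeing in exactly one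
coordinate, which is adjacency in `K₅₆ □ K₅₆`.
-/

open SimpleGraph

namespace Moore57

section

variable {V : Type*} {G : SimpleGraph V}

/-- The local form of `IsSRGWith _ _ 0 1`: there are no triangles, and distinct nonadjacent vertices
have exactly one common neighbour. -/
structure IsMoore (G : SimpleGraph V) : Prop where
  tri : ∀ {a b c}, G.Adj a b → G.Adj a c → G.Adj b c → False
  ex : ∀ {a b}, a ≠ b → ¬ G.Adj a b → ∃ c, G.Adj a c ∧ G.Adj b c
  uniq : ∀ {a b c d}, a ≠ b → G.Adj a c → G.Adj b c → G.Adj a d → G.Adj b d → c = d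

theorem IsMoore.of_isSRGWith [Fintype V] [DecidableEq V] [DecidableRel G.Adj] {n k : ℕ}
    (hG : G.IsSRGWith n k 0 1) : IsMoore G := by
  have tri : ∀ {a b c}, G.Adj a b → G.Adj a c → G.Adj b c → False := by
    intro a b c hab hac hbc
    have h := hG.of_adj a b hab
    rw [Fintype.card_eq_zero_iff] at h
    exact h.elim ⟨c, hac, hbc⟩
  refine ⟨tri, ?_, ?_⟩
  · intro a b hne hab
    have h := hG.of_not_adj hne hab
    obtain ⟨⟨c, hc⟩, -⟩ := Fintype.card_eq_one_iff.1 h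
    exact ⟨c, hc⟩
  · intro a b c d hne hac hbc had hbd
    by_cases hab : G.Adj a b
    · exact (tri hab hac hbc).elim
    have h := hG.of_not_adj hne hab
    obtain ⟨e, he⟩ := Fintype.card_eq_one_iff.1 h
    have h1 := he ⟨c, hac, hbc⟩
    have h2 := he ⟨d, had, hbd⟩
    exact congrArg Subtype.val (h1.trans h2.symm)

theorem IsMoore.dist_eq_two_iff (hM : IsMoore G) {a b : V} :
    G.dist a b = 2 ↔ a ≠ b ∧ ¬ G.Adj a b := by
  constructor
  · intro h
    refine ⟨?_, ?_⟩
    · rintro rfl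
      simp at h
    · intro hab
      rw [dist_eq_one_iff_adj.2 hab] at h
      omega
  · rintro ⟨hne, hab⟩
    obtain ⟨c, hac, hbc⟩ := hM.ex hne hab
    let w : G.Walk a b := .cons hac (.cons hbc.symm .nil)
    have h2 : G.dist a b ≤ 2 := dist_le w
    have h0 : G.dist a b ≠ 0 := (w.reachable.pos_dist_of_ne hne).ne'
    have h1 : G.dist a b ≠ 1 := fun h => hab (dist_eq_one_iff_adj.1 h)
    omega

/-- Membership in the vertex set of `Γ`, phrased without distances: `v` is neither equal nor adjacent to
`x` or `y`. -/
def Far (G : SimpleGraph V) (x y v : V) : Prop :=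
  (x ≠ v ∧ ¬ G.Adj x v) ∧ (y ≠ v ∧ ¬ G.Adj y v)

theorem Far.symm {x y v : V} (h : Far G x y v) : Far G y x v := ⟨h.2, h.1⟩

/-- A neighbour of a far vertex `v` other than `p v` and `q v` is again far. -/
theorem IsMoore.far_of_adj (hM : IsMoore G) {x y v p q z : V} (hv : Far G x y v)
    (hxp : G.Adj x p) (hvp : G.Adj v p) (hyq : G.Adj y q) (hvq : G.Adj v q)
    (hvz : G.Adj v z) (hp : z ≠ p) (hq : z ≠ q) : Far G x y z := by
  refine ⟨⟨?_, fun h => hp (hM.uniq hv.1.1 h hvz hxp hvp)⟩,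
    ⟨?_, fun h => hq (hM.uniq hv.2.1 h hvz hyq hvq)⟩⟩
  · rintro rfl
    exact hv.1.2 hvz.symm
  · rintro rfl
    exact hv.2.2 hvz.symm

/-- Two far vertices with the same neighbour `p` in `N(x)` and different neighbours `q ≠ r` in `N(y)`
are joined by a path of length 3 through far vertices. -/
theorem IsMoore.exists_path_three [Fintype V] [DecidableEq V] [DecidableRel G.Adj]
    (hM : IsMoore G) {x y v w p q r : V} (hdeg : 3 < G.degree v)
    (hv : Far G x y v) (hw : Far G x y w)
    (hxp : G.Adj x p) (hvp : G.Adj v p) (hwp : G.Adj w p)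
    (hyq : G.Adj y q) (hvq : G.Adj v q) (hyr : G.Adj y r) (hwr : G.Adj w r) (hqr : q ≠ r) :
    ∃ u z, Far G x y u ∧ Far G x y z ∧ G.Adj v u ∧ G.Adj u z ∧ G.Adj z w := by
  have hvr : ¬ G.Adj v r := fun h => hqr (hM.uniq hv.2.1 hyq hvq hyr h)
  have hner : v ≠ r := by
    rintro rfl
    exact hv.2.2 hyr
  have hvw : v ≠ w := by
    rintro rfl
    exact hvr hwr
  -- `s` is the only neighbour of `v` whose neighbour in `N(y)` is `r`, hence the one to avoid.
  obtain ⟨s, hvs, hrs⟩ := hM.ex hner hvr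
  obtain ⟨u, hu, hu'⟩ : ∃ u ∈ G.neighborFinset v, u ∉ ({p, q, s} : Finset V) := by
    apply Finset.exists_mem_notMem_of_card_lt_card
    rw [card_neighborFinset_eq_degree]
    exact lt_of_le_of_lt Finset.card_le_three hdeg
  rw [mem_neighborFinset] at hu
  simp only [Finset.mem_insert, Finset.mem_singleton, not_or] at hu'
  obtain ⟨hup, huq, hus⟩ := hu'
  have huw : ¬ G.Adj u w := fun h => hup (hM.uniq hvw hu h.symm hvp hwp)
  have huw' : u ≠ w := by
    rintro rfl
    exact hM.tri hu hvp hwp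
  obtain ⟨z, huz, hwz⟩ := hM.ex huw' huw
  refine ⟨u, z, hM.far_of_adj hv hxp hvp hyq hvq hu hup huq,
    hM.far_of_adj hw hxp hwp hyr hwr hwz ?_ ?_, hu, huz, hwz.symm⟩
  · rintro rfl
    exact hM.tri hu hvp huz
  · rintro rfl
    exact hus (hM.uniq hner hu huz.symm hvs hrs)

end

section

variable {V : Type*} {G : SimpleGraph V} {x y : V}

/-- Distance 3 in `Γ` for far vertices agreeing in the `x`-coordinate only. -/
theorem IsMoore.dist_eq_three [Fintype V] [DecidableEq V] [DecidableRel G.Adj]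
    (hM : IsMoore G) {S : Set V} (hS : ∀ v, v ∈ S ↔ Far G x y v) {v w : S} {p q r : V}
    (hdeg : 3 < G.degree v.1)
    (hxp : G.Adj x p) (hvp : G.Adj v.1 p) (hwp : G.Adj w.1 p)
    (hyq : G.Adj y q) (hvq : G.Adj v.1 q) (hyr : G.Adj y r) (hwr : G.Adj w.1 r) (hqr : q ≠ r) :
    (G.induce S).dist v w = 3 := by
  have hv := (hS _).1 v.2
  have hw := (hS _).1 w.2
  have hvw : v.1 ≠ w.1 := fun h => hqr (hM.uniq hv.2.1 hyq hvq hyr (h ▸ hwr))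
  obtain ⟨u, z, hu, hz, h1, h2, h3⟩ :=
    hM.exists_path_three hdeg hv hw hxp hvp hwp hyq hvq hyr hwr hqr
  have a1 : (G.induce S).Adj v ⟨u, (hS _).2 hu⟩ := h1
  have a2 : (G.induce S).Adj ⟨u, (hS _).2 hu⟩ ⟨z, (hS _).2 hz⟩ := h2
  have a3 : (G.induce S).Adj ⟨z, (hS _).2 hz⟩ w := h3
  let W : (G.induce S).Walk v w := .cons a1 (.cons a2 (.cons a3 .nil))
  have hle : (G.induce S).dist v w ≤ 3 := dist_le W
  refine le_antisymm hle ?_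
  by_contra hlt
  obtain ⟨W', hW'⟩ := W.reachable.exists_walk_length_eq_dist
  rw [← hW'] at hlt
  -- A walk of length at most 2 would be trivial, an edge, or a common neighbour in `S`.
  match W' with
  | .nil => exact hvw rfl
  | .cons b1 .nil => exact hM.tri (show G.Adj v.1 w.1 from b1) hvp hwp
  | .cons (v := m) b1 (.cons b2 .nil) =>
    have b1' : G.Adj v.1 m.1 := b1
    have b2' : G.Adj m.1 w.1 := b2
    have : m.1 = p := hM.uniq hvw b1' b2'.symm hvp hwp
    exact ((hS _).1 m.2).1.2 (this ▸ hxp)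
  | .cons _ (.cons _ (.cons _ _)) =>
    simp only [Walk.length_cons] at hlt
    omega

/-- Far vertices differing in both coordinates are at distance at most 2 in `Γ`. -/
theorem IsMoore.dist_ne_three
    (hM : IsMoore G) {S : Set V} (hS : ∀ v, v ∈ S ↔ Far G x y v) {v w : S} {p p' q q' : V}
    (hxp : G.Adj x p) (hvp : G.Adj v.1 p) (hxp' : G.Adj x p') (hwp' : G.Adj w.1 p')
    (hyq : G.Adj y q) (hvq : G.Adj v.1 q) (hyq' : G.Adj y q') (hwq' : G.Adj w.1 q')
    (hp : p ≠ p') (hq : q ≠ q') : (G.induce S).dist v w ≠ 3 := by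
  have hv := (hS _).1 v.2
  have hw := (hS _).1 w.2
  have hvw : v.1 ≠ w.1 := fun h => hq (hM.uniq hv.2.1 hyq hvq hyq' (h ▸ hwq'))
  by_cases h : G.Adj v.1 w.1
  · have h' : (G.induce S).Adj v w := h
    rw [dist_eq_one_iff_adj.2 h']
    omega
  obtain ⟨z, hvz, hwz⟩ := hM.ex hvw h
  have hz : Far G x y z := by
    refine hM.far_of_adj hv hxp hvp hyq hvq hvz ?_ ?_
    · rintro rfl
      exact hp (hM.uniq hw.1.1 hxp hwz hxp' hwp')
    · rintro rfl
      exact hq (hM.uniq hw.2.1 hyq hwz hyq' hwq')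
  have a1 : (G.induce S).Adj v ⟨z, (hS _).2 hz⟩ := hvz
  have a2 : (G.induce S).Adj ⟨z, (hS _).2 hz⟩ w := hwz.symm
  have := dist_le (Walk.cons a1 (.cons a2 .nil))
  simp only [Walk.length_cons, Walk.length_nil] at this
  omega

theorem nonempty_equiv_fin [Fintype V] [DecidableEq V] [DecidableRel G.Adj] {k : ℕ}
    (hdeg : G.degree x = k + 1) (hxy : G.Adj x y) :
    Nonempty ({a : V // G.Adj x a ∧ a ≠ y} ≃ Fin k) := by
  refine ⟨Fintype.equivFinOfCardEq ?_⟩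
  have : Fintype.card {a : V // G.Adj x a ∧ a ≠ y} = ((G.neighborFinset x).erase y).card := by
    apply Fintype.card_of_subtype
    intro a
    simp [and_comm]
  rw [this, Finset.card_erase_of_mem (by simpa using hxy), card_neighborFinset_eq_degree, hdeg]
  rfl

end

end Moore57

open Moore57 in
/-- Let `G` be a Moore graph of degree 57 (a strongly regular graph with
parameters (3250, 57, 0, 1)), let `x, y` be adjacent vertices, let `Γ` be the subgraph of `G`
induced on the vertices at distance 2 (in `G`) from both `x` and `y`, and let `Γ₃` be the graph
on the same vertex set with two vertices adjacent iff their distance in `Γ` is 3.  Then `Γ₃` is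
isomorphic to the Cartesian (box) product `K₅₆ □ K₅₆`. -/
theorem moore57_gamma3_iso_box_product
    {V : Type*} [Fintype V] [DecidableEq V] (G : SimpleGraph V) [DecidableRel G.Adj]
    (hG : G.IsSRGWith 3250 57 0 1)
    (x y : V) (hxy : G.Adj x y)
    (Γ : SimpleGraph {v : V | G.dist x v = 2 ∧ G.dist y v = 2})
    (hΓ : Γ = G.induce {v : V | G.dist x v = 2 ∧ G.dist y v = 2})
    (Γ₃ : SimpleGraph {v : V | G.dist x v = 2 ∧ G.dist y v = 2})
    (hΓ₃ : ∀ a b, Γ₃.Adj a b ↔ Γ.dist a b = 3) :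
    Nonempty (Γ₃ ≃g (completeGraph (Fin 56) □ completeGraph (Fin 56))) := by
  have hM := IsMoore.of_isSRGWith hG
  have hdeg : ∀ v, G.degree v = 57 := fun v => hG.regular v
  obtain ⟨eA⟩ := nonempty_equiv_fin (k := 56) (hdeg x) hxy
  obtain ⟨eB⟩ := nonempty_equiv_fin (k := 56) (hdeg y) hxy.symm
  subst hΓ
  have hS : ∀ v, v ∈ {v : V | G.dist x v = 2 ∧ G.dist y v = 2} ↔ Far G x y v := by
    intro v
    simp only [Set.mem_ofPred_eq, hM.dist_eq_two_iff, Far]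
  have hS' : ∀ v, v ∈ {v : V | G.dist x v = 2 ∧ G.dist y v = 2} ↔ Far G y x v :=
    fun v => (hS v).trans ⟨Far.symm, Far.symm⟩
  generalize {v : V | G.dist x v = 2 ∧ G.dist y v = 2} = S at *
  have hp : ∀ v : S, ∃ a : {a : V // G.Adj x a ∧ a ≠ y}, G.Adj v.1 a.1 := by
    intro v
    have hv := (hS _).1 v.2
    obtain ⟨c, h1, h2⟩ := hM.ex hv.1.1 hv.1.2
    refine ⟨⟨c, h1, ?_⟩, h2⟩
    rintro rfl
    exact hv.2.2 h2.symm
  have hq : ∀ v : S, ∃ a : {a : V // G.Adj y a ∧ a ≠ x}, G.Adj v.1 a.1 := by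
    intro v
    have hv := (hS _).1 v.2
    obtain ⟨c, h1, h2⟩ := hM.ex hv.2.1 hv.2.2
    refine ⟨⟨c, h1, ?_⟩, h2⟩
    rintro rfl
    exact hv.1.2 h2.symm
  choose p hp using hp
  choose q hq using hq
  -- Vertices of `N(x) \ {y}` and `N(y) \ {x}` are distinct and nonadjacent, by girth 5.
  have hAB : ∀ (a : {a : V // G.Adj x a ∧ a ≠ y}) (b : {a : V // G.Adj y a ∧ a ≠ x}),
      a.1 ≠ b.1 ∧ ¬ G.Adj a.1 b.1 := by
    rintro ⟨a, ha, hay⟩ ⟨b, hb, hbx⟩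
    refine ⟨?_, fun h => hbx (hM.uniq hay h hb ha.symm hxy.symm)⟩
    rintro rfl
    exact hM.tri hxy ha hb
  have hinj : Function.Injective fun v : S => (eA (p v), eB (q v)) := by
    intro v w h
    simp only [Prod.mk.injEq, EmbeddingLike.apply_eq_iff_eq] at h
    have h1 := hp w
    have h2 := hq w
    rw [← h.1] at h1
    rw [← h.2] at h2
    exact Subtype.ext
      (hM.uniq (hAB (p v) (q v)).1 (hp v).symm (hq v).symm h1.symm h2.symm)
  have hsurj : Function.Surjective fun v : S => (eA (p v), eB (q v)) := by
    rintro ⟨i, j⟩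
    obtain ⟨a, rfl⟩ := eA.surjective i
    obtain ⟨b, rfl⟩ := eB.surjective j
    obtain ⟨hne, hna⟩ := hAB a b
    obtain ⟨v, hav, hbv⟩ := hM.ex hne hna
    have hv : Far G x y v := by
      refine ⟨⟨?_, fun h => hM.tri a.2.1 h hav⟩, ⟨?_, fun h => hM.tri b.2.1 h hbv⟩⟩
      · rintro rfl
        exact hM.tri hxy hbv.symm b.2.1
      · rintro rfl
        exact hM.tri hxy a.2.1 hav.symm
    refine ⟨⟨v, (hS v).2 hv⟩, ?_⟩
    simp only [Prod.mk.injEq, EmbeddingLike.apply_eq_iff_eq]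
    exact ⟨Subtype.ext (hM.uniq hv.1.1 (p _).2.1 (hp ⟨v, (hS v).2 hv⟩) a.2.1 hav.symm),
      Subtype.ext (hM.uniq hv.2.1 (q _).2.1 (hq ⟨v, (hS v).2 hv⟩) b.2.1 hbv.symm)⟩
  refine ⟨⟨Equiv.ofBijective _ ⟨hinj, hsurj⟩, ?_⟩⟩
  intro v w
  change (completeGraph (Fin 56) □ completeGraph (Fin 56)).Adj (eA (p v), eB (q v))
    (eA (p w), eB (q w)) ↔ _
  simp only [boxProd_adj, hΓ₃, completeGraph_eq_top, top_adj, ne_eq,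
    EmbeddingLike.apply_eq_iff_eq]
  have hdv : 3 < G.degree v.1 := by
    rw [hdeg]
    norm_num
  by_cases h1 : p v = p w <;> by_cases h2 : q v = q w
  · have : v = w := hinj (by simp [h1, h2])
    simp [this]
  · have := hM.dist_eq_three hS hdv (p v).2.1 (hp v) (h1 ▸ hp w) (q v).2.1 (hq v) (q w).2.1 (hq w)
      (fun h => h2 (Subtype.ext h))
    simp [h1, h2, this]
  · have := hM.dist_eq_three hS' hdv (q v).2.1 (hq v) (h2 ▸ hq w) (p v).2.1 (hp v) (p w).2.1 (hp w)
      (fun h => h1 (Subtype.ext h))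
    simp [h1, h2, this]
  · have := hM.dist_ne_three hS (p v).2.1 (hp v) (p w).2.1 (hp w) (q v).2.1 (hq v) (q w).2.1 (hq w)
      (fun h => h1 (Subtype.ext h)) (fun h => h2 (Subtype.ext h))
    simp [h1, h2, this]
end

section
/- Let G be a Moore graph of degree 57, let x, y be adjacent vertices of G, and let Γ be the induced subgraph of G on the vertices at distance 2 from both x and y. Let u, v, w be vertices of Γ with distances (in Γ) d(v,w) = 3, d(u,w) = 2, d(u,v) = 2. Then the number of vertices z of Γ with d(z,u) = 1, d(z,v) = 3, d(z,w) = 3 is exactly 1. -/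
/-!
Put `X = N(x) \ {y}` and `Y = N(y) \ {x}`. In the Moore graph any two distinct nonadjacent vertices
have exactly one common neighbour, so every vertex of `Γ` has exactly one neighbour in `X` and
one in `Y`, and every other neighbour of it lies in `Γ`. Hence two distinct nonadjacent vertices
of `Γ` are at distance 2 in `Γ` if their common neighbour lies in `Γ`, and at distance greater
than 2 if it lies in `X ∪ Y`.

Since `d(v,w) = 3`, the common neighbour `a` of `v` and `w` lies in `X ∪ Y`, say in `X`
(the two cases are symmetric, and `card_eq_one_of_common` treats both). As `d(u,v) = 2`, `u` is not
adjacent to `a`, so `u` and `a` have a unique common neighbour `z`. It lies in `Γ` and is the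
required vertex: its common neighbour with `v` and with `w` is `a`, so both distances exceed 2,
and they are at most `1 + 2` through `u`. Conversely, a vertex `z'` at distance 3 from both `v`
and `w` must be adjacent to `a`, for otherwise its common neighbours with `v` and with `w` both
lie in `Y`, hence agree, and would be a second common neighbour of `v` and `w`.
-/

open SimpleGraph

theorem exists_middle_of_dist_eq_two {β : Type*} (H : SimpleGraph β) {a b : β}
    (h : H.dist a b = 2) : a ≠ b ∧ ¬ H.Adj a b ∧ ∃ c, H.Adj a c ∧ H.Adj b c := by
  refine ⟨?_, ?_, ?_⟩
  · rintro rfl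
    simp at h
  · intro hab
    rw [SimpleGraph.dist_eq_one_iff_adj.mpr hab] at h
    omega
  · have hr : H.Reachable a b := by
      by_contra hn
      rw [SimpleGraph.dist_eq_zero_of_not_reachable hn] at h
      omega
    obtain ⟨p, hp⟩ := hr.exists_walk_length_eq_dist
    rw [h] at hp
    cases p with
    | nil => simp at hp
    | cons h1 q =>
      cases q with
      | nil => simp at hp
      | cons h2 r =>
        cases r with
        | nil => exact ⟨_, h1, h2.symm⟩
        | cons h3 s => simp at hp

theorem dist_eq_two_of_middle {β : Type*} (H : SimpleGraph β) {a b c : β}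
    (hne : a ≠ b) (hnadj : ¬ H.Adj a b) (hac : H.Adj a c) (hbc : H.Adj b c) :
    H.dist a b = 2 := by
  have hle : H.dist a b ≤ 2 := by
    simpa using SimpleGraph.dist_le (Walk.cons hac (Walk.cons hbc.symm Walk.nil))
  have h0 : H.dist a b ≠ 0 := by
    have hr : H.Reachable a b := hac.reachable.trans hbc.symm.reachable
    exact (hr.pos_dist_of_ne hne).ne'
  have h1 : H.dist a b ≠ 1 := fun h => hnadj (SimpleGraph.dist_eq_one_iff_adj.mp h)
  omega

/-- The count when the common neighbour `a` of `v` and `w` is adjacent to `p`. Here `{p, q}` is the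
edge defining `Γ`, in either order; `tri` and `uniq` express girth 5 and `mid` diameter 2. -/
theorem card_eq_one_of_common {α : Type*} (G : SimpleGraph α)
    (tri : ∀ a b c, G.Adj a b → G.Adj a c → ¬ G.Adj b c)
    (mid : ∀ a b, a ≠ b → ¬ G.Adj a b → ∃ c, G.Adj a c ∧ G.Adj b c)
    (uniq : ∀ a b c d, a ≠ b → G.Adj a c → G.Adj b c → G.Adj a d → G.Adj b d → c = d)
    (p q : α) (hpq : G.Adj p q) (S : Set α)
    (hS : ∀ c, c ∈ S ↔ c ≠ p ∧ c ≠ q ∧ ¬ G.Adj p c ∧ ¬ G.Adj q c)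
    (u v w : S) (hvw : v ≠ w)
    (huw : (G.induce S).dist u w = 2) (huv : (G.induce S).dist u v = 2)
    (a : α) (hva : G.Adj v a) (hwa : G.Adj w a) (hpa : G.Adj p a) :
    {z : S | (G.induce S).dist z u = 1 ∧ (G.induce S).dist z v = 3 ∧
      (G.induce S).dist z w = 3}.ncard = 1 := by
  obtain ⟨huw0, huw1, c, huc, hwc⟩ := exists_middle_of_dist_eq_two _ huw
  obtain ⟨huv0, huv1, d, hud, hvd⟩ := exists_middle_of_dist_eq_two _ huv
  simp only [SimpleGraph.comap_adj, Function.Embedding.subtype_apply] at huw1 huv1 huc hwc hud hvd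
  have haS : a ∉ S := fun h => ((hS a).1 h).2.2.1 hpa
  have hne : ∀ {s t : S}, s ≠ t → (s : α) ≠ t := fun h h' => h (Subtype.ext h')
  have hua : ¬ G.Adj u a := by
    intro h
    exact haS (uniq u v d a (hne huv0) hud hvd h hva ▸ d.2)
  have hu := (hS u).1 u.2
  have hv := (hS v).1 v.2
  have hw := (hS w).1 w.2
  have hua0 : (u : α) ≠ a := fun h => hu.2.2.1 (h ▸ hpa)
  obtain ⟨z, huz, haz⟩ := mid u a hua0 hua
  have hzp : z ≠ p := by
    rintro rfl
    exact hu.2.2.1 huz.symm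
  have hzq : z ≠ q := by
    rintro rfl
    exact hu.2.2.2 huz.symm
  have hpz : ¬ G.Adj p z := fun h => tri a p z hpa.symm haz h
  have hqa : q ≠ a := by
    rintro rfl
    exact hv.2.2.2 hva.symm
  have hqz : ¬ G.Adj q z := by
    intro h
    exact hzp (uniq q a z p hqa h haz hpq.symm hpa.symm)
  have hzS : z ∈ S := (hS z).2 ⟨hzp, hzq, hpz, hqz⟩
  -- `z` lies at distance 3 from each of `v` and `w`; the argument is the same for both.
  have far : ∀ t : S, G.Adj t a → (G.induce S).dist u t = 2 → u ≠ t → ¬ G.Adj u t →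
      (G.induce S).dist ⟨z, hzS⟩ t = 3 := by
    intro t hta hut hut0 hut1
    have hr : (G.induce S).Reachable u t := by
      by_contra hn
      rw [SimpleGraph.dist_eq_zero_of_not_reachable hn] at hut
      omega
    have hzu : (G.induce S).Adj ⟨z, hzS⟩ u := by simpa using huz.symm
    have hle : (G.induce S).dist ⟨z, hzS⟩ t ≤ 3 := by
      obtain ⟨r, hr'⟩ := hr.exists_walk_length_eq_dist
      have := SimpleGraph.dist_le (Walk.cons hzu r)
      simp only [Walk.length_cons] at this
      omega
    have hzt : (⟨z, hzS⟩ : S) ≠ t := by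
      rintro rfl
      exact hut1 huz
    have h0 := ((hzu.reachable.trans hr).pos_dist_of_ne hzt).ne'
    have h1 : (G.induce S).dist ⟨z, hzS⟩ t ≠ 1 := by
      intro h
      have h' := SimpleGraph.dist_eq_one_iff_adj.mp h
      simp only [SimpleGraph.comap_adj, Function.Embedding.subtype_apply] at h'
      exact tri a z t haz hta.symm h'
    have h2 : (G.induce S).dist ⟨z, hzS⟩ t ≠ 2 := by
      intro h
      obtain ⟨-, -, e, hze, hte⟩ := exists_middle_of_dist_eq_two _ h
      simp only [SimpleGraph.comap_adj, Function.Embedding.subtype_apply] at hze hte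
      exact haS (uniq z t e a (hne hzt) hze hte haz.symm hta ▸ e.2)
    omega
  -- A distance-3 pair has its common neighbour in `G` adjacent to `p` or to `q`.
  have near : ∀ s t : S, (G.induce S).dist s t = 3 →
      ∃ e, G.Adj s e ∧ G.Adj t e ∧ (G.Adj p e ∨ G.Adj q e) := by
    intro s t hst
    have hst0 : s ≠ t := by
      rintro rfl
      simp at hst
    have hst1 : ¬ G.Adj s t := by
      intro h
      have : (G.induce S).Adj s t := by simpa using h
      rw [SimpleGraph.dist_eq_one_iff_adj.mpr this] at hst
      omega
    obtain ⟨e, hse, hte⟩ := mid s t (hne hst0) hst1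
    refine ⟨e, hse, hte, ?_⟩
    by_contra hcon
    push Not at hcon
    have hs := (hS s).1 s.2
    have heS : e ∈ S := by
      refine (hS e).2 ⟨?_, ?_, hcon.1, hcon.2⟩
      · rintro rfl
        exact hs.2.2.1 hse.symm
      · rintro rfl
        exact hs.2.2.2 hse.symm
    have := dist_eq_two_of_middle (G.induce S) (c := ⟨e, heS⟩) hst0
      (by simpa using hst1) (by simpa using hse) (by simpa using hte)
    omega
  rw [Set.ncard_eq_one]
  refine ⟨⟨z, hzS⟩, ?_⟩
  ext t
  simp only [Set.mem_ofPred_eq, Set.mem_singleton_iff]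
  constructor
  · rintro ⟨htu, htv, htw⟩
    have htu' := SimpleGraph.dist_eq_one_iff_adj.mp htu
    simp only [SimpleGraph.comap_adj, Function.Embedding.subtype_apply] at htu'
    obtain ⟨e, hte, hve, he⟩ := near t v htv
    obtain ⟨f, htf, hwf, hf⟩ := near t w htw
    have ht := (hS t).1 t.2
    have hta : G.Adj t a := by
      rcases he with he | he
      · exact uniq p v e a hv.1.symm he hve hpa hva ▸ hte
      rcases hf with hf | hf
      · exact uniq p w f a hw.1.symm hf hwf hpa hwa ▸ htf
      · have hef : e = f := uniq q t e f ht.2.1.symm he hte hf htf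
        have hea : e = a := uniq v w e a (hne hvw) hve (hef ▸ hwf) hva hwa
        exact hea ▸ hte
    exact Subtype.ext (uniq u a t z hua0 htu'.symm hta.symm huz haz)
  · rintro rfl
    refine ⟨SimpleGraph.dist_eq_one_iff_adj.mpr (by simpa using huz.symm), ?_, ?_⟩
    · exact far v hva huv huv0 huv1
    · exact far w hwa huw huw0 huw1

/-- Lemma 3(a). In the distance-regular graph `Γ` induced by a Moore graph of
degree 57 on the common distance-2 neighbors of two adjacent vertices `x, y`, if `u, v, w` have
distances `d(v,w) = 3`, `d(u,w) = 2`, `d(u,v) = 2`, then there is exactly one vertex `z` with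
`d(z,u) = 1`, `d(z,v) = 3`, `d(z,w) = 3`. -/
theorem moore57_x133_322
    {α : Type*} [Fintype α] [DecidableEq α] (G : SimpleGraph α) [DecidableRel G.Adj]
    (hG : G.IsSRGWith 3250 57 0 1)
    (x y : α) (hxy : G.Adj x y)
    (Γ : SimpleGraph {v : α | G.dist x v = 2 ∧ G.dist y v = 2})
    (hΓ : Γ = G.induce {v : α | G.dist x v = 2 ∧ G.dist y v = 2})
    (u v w : {v : α | G.dist x v = 2 ∧ G.dist y v = 2})
    (hU : Γ.dist v w = 3) (hV : Γ.dist u w = 2) (hW : Γ.dist u v = 2) :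
    {z : {v : α | G.dist x v = 2 ∧ G.dist y v = 2} |
      Γ.dist z u = 1 ∧ Γ.dist z v = 3 ∧ Γ.dist z w = 3}.ncard = 1 := by
  subst hΓ
  have tri : ∀ a b c, G.Adj a b → G.Adj a c → ¬ G.Adj b c := by
    intro a b c hab hac hbc
    have h := Fintype.card_eq_zero_iff.mp (hG.of_adj a b hab)
    exact h.false ⟨c, (G.mem_commonNeighbors).2 ⟨hac, hbc⟩⟩
  have mid : ∀ a b, a ≠ b → ¬ G.Adj a b → ∃ c, G.Adj a c ∧ G.Adj b c := by
    intro a b hab hn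
    obtain ⟨⟨c, hc⟩, -⟩ := Fintype.card_eq_one_iff.mp (hG.of_not_adj hab hn)
    exact ⟨c, (G.mem_commonNeighbors).1 hc⟩
  have uniq : ∀ a b c d, a ≠ b → G.Adj a c → G.Adj b c → G.Adj a d → G.Adj b d → c = d := by
    intro a b c d hab hac hbc had hbd
    have hn : ¬ G.Adj a b := fun h => tri a b c h hac hbc
    have h1 := (Fintype.card_eq_one_iff_nonempty_unique.mp (hG.of_not_adj hab hn)).some
    have hs : (⟨c, (G.mem_commonNeighbors).2 ⟨hac, hbc⟩⟩ : G.commonNeighbors a b) =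
        ⟨d, (G.mem_commonNeighbors).2 ⟨had, hbd⟩⟩ := h1.instSubsingleton.elim _ _
    exact congrArg Subtype.val hs
  have dist2 : ∀ a b, G.dist a b = 2 ↔ b ≠ a ∧ ¬ G.Adj a b := by
    intro a b
    constructor
    · intro h
      obtain ⟨h0, h1, -⟩ := exists_middle_of_dist_eq_two G h
      exact ⟨h0.symm, h1⟩
    · rintro ⟨h0, h1⟩
      obtain ⟨c, hac, hbc⟩ := mid a b h0.symm h1
      exact dist_eq_two_of_middle G h0.symm h1 hac hbc
  have hS : ∀ c, c ∈ {v : α | G.dist x v = 2 ∧ G.dist y v = 2} ↔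
      c ≠ x ∧ c ≠ y ∧ ¬ G.Adj x c ∧ ¬ G.Adj y c := by
    intro c
    rw [Set.mem_ofPred_eq, dist2, dist2]
    tauto
  have hvw : v ≠ w := by
    rintro rfl
    simp at hU
  have hvw' : (v : α) ≠ w := fun h => hvw (Subtype.ext h)
  have hnadj : ¬ G.Adj v w := by
    intro h
    rw [SimpleGraph.dist_eq_one_iff_adj.mpr (by simpa using h)] at hU
    omega
  obtain ⟨a, hva, hwa⟩ := mid v w hvw' hnadj
  by_cases hxa : G.Adj x a
  · exact card_eq_one_of_common G tri mid uniq x y hxy _ hS u v w hvw hV hW a hva hwa hxa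
  by_cases hya : G.Adj y a
  · exact card_eq_one_of_common G tri mid uniq y x hxy.symm _
      (fun c => (hS c).trans (by tauto)) u v w hvw hV hW a hva hwa hya
  · exfalso
    have hv := (hS v).1 v.2
    have haS : a ∈ {v : α | G.dist x v = 2 ∧ G.dist y v = 2} := by
      refine (hS a).2 ⟨?_, ?_, hxa, hya⟩
      · rintro rfl
        exact hv.2.2.1 hva.symm
      · rintro rfl
        exact hv.2.2.2 hva.symm
    have := dist_eq_two_of_middle (G.induce {v : α | G.dist x v = 2 ∧ G.dist y v = 2})
      (c := ⟨a, haS⟩) hvw (by simpa using hnadj) (by simpa using hva) (by simpa using hwa)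
    omega
end

section
/- Let G be a Moore graph of degree 57, let x, y be adjacent vertices of G, and let Γ be the induced subgraph of G on the vertices at distance 2 from both x and y. Let u, v, w be vertices of Γ with pairwise distances (in Γ) d(v,w) = d(u,w) = d(u,v) = 2. Then each of the following six counts is at most 2: the number of vertices z of Γ with (d(z,u), d(z,v), d(z,w)) equal to (1,3,3), (2,3,3), (3,1,3), (3,2,3), (3,3,1), and (3,3,2), respectively. -/
/-!
Every vertex `z` of `Γ` has a unique common neighbour `p z` with `x` and a unique common
neighbour `q z` with `y`; since `p z` and `q z` are distinct and have at most one common neighbour,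
`z` is determined by the pair `(p z, q z)`. Thus `Γ` sits in a 56 × 56 grid.

Two vertices at distance 3 in `Γ` have their common neighbour in `G` outside `Γ`, so it is adjacent
to `x` or to `y`, i.e. the two vertices lie in a common row or column (`row_or_col_of_dist_three`).
Two vertices at distance 2 have it inside `Γ`, so they lie in distinct rows and
distinct columns (`not_common_of_dist_two`). Hence if `d(v,w) = 2`, a vertex at distance 3 from both
`v` and `w` is one of the two grid points (row of `v`, column of `w`), (row of `w`, column of `v`):
there are at most two such vertices (`ncard_dist_three_le_two`), and each of the six sets is
contained in a set of this kind.
-/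

open SimpleGraph

namespace Moore57

variable {α : Type*} [Fintype α] [DecidableEq α] {G : SimpleGraph α} [DecidableRel G.Adj]

theorem common_unique (hG : G.IsSRGWith 3250 57 0 1) {a b c d : α} (hab : a ≠ b)
    (hca : G.Adj c a) (hcb : G.Adj c b) (hda : G.Adj d a) (hdb : G.Adj d b) : c = d := by
  have hc : c ∈ G.commonNeighbors a b := ⟨hca.symm, hcb.symm⟩
  have hd : d ∈ G.commonNeighbors a b := ⟨hda.symm, hdb.symm⟩
  by_cases h : G.Adj a b
  · have h0 := hG.of_adj a b h
    rw [Fintype.card_eq_zero_iff] at h0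
    exact (h0.false ⟨c, hc⟩).elim
  · have h1 := hG.of_not_adj hab h
    have := Fintype.card_le_one_iff.1 h1.le ⟨c, hc⟩ ⟨d, hd⟩
    exact congrArg Subtype.val this

theorem triangle_free (hG : G.IsSRGWith 3250 57 0 1) {a b c : α}
    (hab : G.Adj a b) (hca : G.Adj c a) (hcb : G.Adj c b) : False := by
  have h0 := hG.of_adj a b hab
  rw [Fintype.card_eq_zero_iff] at h0
  exact h0.false ⟨c, hca.symm, hcb.symm⟩

theorem common_exists (hG : G.IsSRGWith 3250 57 0 1) {a b : α} (hab : a ≠ b)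
    (h : ¬ G.Adj a b) : ∃ c, G.Adj c a ∧ G.Adj c b := by
  have h1 := hG.of_not_adj hab h
  obtain ⟨⟨c, hc⟩, -⟩ := Fintype.card_eq_one_iff.1 h1
  exact ⟨c, hc.1.symm, hc.2.symm⟩

theorem common_exists_of_dist_two (hG : G.IsSRGWith 3250 57 0 1) {a b : α}
    (h : G.dist a b = 2) : ∃ c, G.Adj c a ∧ G.Adj c b := by
  apply common_exists hG
  · rintro rfl
    simp at h
  · intro hadj
    rw [dist_eq_one_iff_adj.2 hadj] at h
    omega

/-- A neighbour of a vertex at distance 2 from `x` is itself at distance 2 from `x` unless it is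
adjacent to `x`. -/
theorem dist_two_of_not_adj (hG : G.IsSRGWith 3250 57 0 1) {x c z : α} (hz : G.dist x z = 2)
    (hcz : G.Adj c z) (hxc : ¬ G.Adj x c) : G.dist x c = 2 := by
  have hne : x ≠ c := by
    rintro rfl
    rw [dist_eq_one_iff_adj.2 hcz] at hz
    omega
  obtain ⟨d, hdx, hdc⟩ := common_exists hG hne hxc
  have hle : G.dist x c ≤ 2 := dist_le (Walk.cons hdx.symm (Walk.cons hdc Walk.nil))
  have h0 : G.dist x c ≠ 0 := fun h =>
    hne (((hdx.symm.reachable).trans hdc.reachable).dist_eq_zero_iff.1 h)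
  have h1 : G.dist x c ≠ 1 := fun h => hxc (dist_eq_one_iff_adj.1 h)
  omega

/-- The vertex set of `Γ`: the vertices at distance 2 from both `x` and `y`. -/
abbrev S (G : SimpleGraph α) (x y : α) : Set α := {v : α | G.dist x v = 2 ∧ G.dist y v = 2}

theorem row_or_col_of_dist_three (hG : G.IsSRGWith 3250 57 0 1) {x y : α} {z v : S G x y}
    (h : (G.induce (S G x y)).dist z v = 3) :
    ∃ c, (G.Adj x c ∨ G.Adj y c) ∧ G.Adj c z ∧ G.Adj c v := by
  have hne : (z : α) ≠ v := by
    intro e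
    rw [Subtype.ext e] at h
    simp at h
  have hnadj : ¬ G.Adj z v := by
    intro hadj
    have : (G.induce (S G x y)).Adj z v := hadj
    rw [dist_eq_one_iff_adj.2 this] at h
    omega
  obtain ⟨c, hcz, hcv⟩ := common_exists hG hne hnadj
  refine ⟨c, ?_, hcz, hcv⟩
  by_contra! hc
  have hcS : c ∈ S G x y :=
    ⟨dist_two_of_not_adj hG z.2.1 hcz hc.1, dist_two_of_not_adj hG z.2.2 hcz hc.2⟩
  have h1 : (G.induce (S G x y)).Adj z ⟨c, hcS⟩ := hcz.symm
  have h2 : (G.induce (S G x y)).Adj ⟨c, hcS⟩ v := hcv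
  have hle := dist_le (Walk.cons h1 (Walk.cons h2 Walk.nil))
  rw [h] at hle
  simp at hle

theorem not_common_of_dist_two (hG : G.IsSRGWith 3250 57 0 1) {x y : α} {v w : S G x y}
    (h : (G.induce (S G x y)).dist v w = 2) {c : α} (hc : G.Adj x c ∨ G.Adj y c)
    (hcv : G.Adj c v) (hcw : G.Adj c w) : False := by
  have hne : (v : α) ≠ w := by
    intro e
    rw [Subtype.ext e] at h
    simp at h
  obtain ⟨p, hp⟩ := (Reachable.of_dist_ne_zero (by omega :
    (G.induce (S G x y)).dist v w ≠ 0)).exists_walk_length_eq_dist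
  rw [h] at hp
  have h1 : (G.induce (S G x y)).Adj v (p.getVert 1) := by
    simpa using p.adj_getVert_succ (i := 0) (by omega)
  have h2 : (G.induce (S G x y)).Adj (p.getVert 1) w := by
    have := p.adj_getVert_succ (i := 1) (by omega)
    rwa [show 1 + 1 = p.length by omega, p.getVert_length] at this
  have e : c = (p.getVert 1 : α) :=
    common_unique hG hne hcv hcw (G.adj_symm h1) h2
  have hS := (p.getVert 1).2
  rw [← e] at hS
  rcases hc with hc | hc
  · have := hS.1
    rw [dist_eq_one_iff_adj.2 hc] at this
    omega
  · have := hS.2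
    rw [dist_eq_one_iff_adj.2 hc] at this
    omega

theorem ncard_dist_three_le_two (hG : G.IsSRGWith 3250 57 0 1) {x y : α} (hxy : G.Adj x y)
    {v w : S G x y} (h : (G.induce (S G x y)).dist v w = 2) :
    {z : S G x y | (G.induce (S G x y)).dist z v = 3 ∧
      (G.induce (S G x y)).dist z w = 3}.ncard ≤ 2 := by
  choose p hpx hp using fun z : S G x y => common_exists_of_dist_two hG z.2.1
  choose q hqy hq using fun z : S G x y => common_exists_of_dist_two hG z.2.2
  have hxne : ∀ z : S G x y, x ≠ z := by
    intro z e
    have := z.2.1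
    rw [← e] at this
    simp at this
  have hyne : ∀ z : S G x y, y ≠ z := by
    intro z e
    have := z.2.2
    rw [← e] at this
    simp at this
  have hinj : ∀ z z' : S G x y, p z = p z' → q z = q z' → z = z' := by
    intro z z' h1 h2
    have hpq : p z ≠ q z := fun e => triangle_free hG hxy (hpx z) (e ▸ hqy z)
    exact Subtype.ext (common_unique hG hpq (hp z).symm (hq z).symm
      (h1 ▸ (hp z').symm) (h2 ▸ (hq z').symm))
  have h3 : ∀ z t : S G x y, (G.induce (S G x y)).dist z t = 3 → p z = p t ∨ q z = q t := by
    intro z t hd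
    obtain ⟨c, hc | hc, hcz, hct⟩ := row_or_col_of_dist_three hG hd
    · left
      rw [← common_unique hG (hxne z) hc.symm hcz (hpx z) (hp z),
        ← common_unique hG (hxne t) hc.symm hct (hpx t) (hp t)]
    · right
      rw [← common_unique hG (hyne z) hc.symm hcz (hqy z) (hq z),
        ← common_unique hG (hyne t) hc.symm hct (hqy t) (hq t)]
  have hpne : p v ≠ p w := fun e =>
    not_common_of_dist_two hG h (Or.inl (hpx v).symm) (hp v) (e ▸ hp w)
  have hqne : q v ≠ q w := fun e =>
    not_common_of_dist_two hG h (Or.inr (hqy v).symm) (hq v) (e ▸ hq w)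
  have hsub : {z : S G x y | (G.induce (S G x y)).dist z v = 3 ∧
      (G.induce (S G x y)).dist z w = 3} ⊆
      {z | p z = p v ∧ q z = q w} ∪ {z | p z = p w ∧ q z = q v} := by
    rintro z ⟨hv, hw⟩
    rcases h3 z v hv with a | a <;> rcases h3 z w hw with b | b
    · exact (hpne (a.symm.trans b)).elim
    · exact Or.inl ⟨a, b⟩
    · exact Or.inr ⟨b, a⟩
    · exact (hqne (a.symm.trans b)).elim
  have hone : ∀ a b : α, {z | p z = a ∧ q z = b}.ncard ≤ 1 := by
    intro a b
    rw [Set.ncard_le_one_iff]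
    rintro z z' ⟨h1, h2⟩ ⟨h1', h2'⟩
    exact hinj z z' (h1.trans h1'.symm) (h2.trans h2'.symm)
  calc _ ≤ _ := Set.ncard_le_ncard hsub
    _ ≤ _ := Set.ncard_union_le _ _
    _ ≤ 2 := Nat.add_le_add (hone _ _) (hone _ _)

end Moore57

/-- Lemma 3(b). In the distance-regular graph `Γ` induced by a Moore graph of
degree 57 on the common distance-2 neighbors of two adjacent vertices `x, y`, if `u, v, w` have
pairwise distances `d(v,w) = d(u,w) = d(u,v) = 2`, then each of the six counts of vertices `z`
with `(d(z,u), d(z,v), d(z,w))` equal to `(1,3,3)`, `(2,3,3)`, `(3,1,3)`, `(3,2,3)`, `(3,3,1)`,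
`(3,3,2)` is at most 2. -/
theorem moore57_sporadic_bounds_222
    {α : Type*} [Fintype α] [DecidableEq α] (G : SimpleGraph α) [DecidableRel G.Adj]
    (hG : G.IsSRGWith 3250 57 0 1)
    (x y : α) (hxy : G.Adj x y)
    (Γ : SimpleGraph {v : α | G.dist x v = 2 ∧ G.dist y v = 2})
    (hΓ : Γ = G.induce {v : α | G.dist x v = 2 ∧ G.dist y v = 2})
    (u v w : {v : α | G.dist x v = 2 ∧ G.dist y v = 2})
    (hU : Γ.dist v w = 2) (hV : Γ.dist u w = 2) (hW : Γ.dist u v = 2) :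
    {z : {v : α | G.dist x v = 2 ∧ G.dist y v = 2} |
      Γ.dist z u = 1 ∧ Γ.dist z v = 3 ∧ Γ.dist z w = 3}.ncard ≤ 2 ∧
    {z : {v : α | G.dist x v = 2 ∧ G.dist y v = 2} |
      Γ.dist z u = 2 ∧ Γ.dist z v = 3 ∧ Γ.dist z w = 3}.ncard ≤ 2 ∧
    {z : {v : α | G.dist x v = 2 ∧ G.dist y v = 2} |
      Γ.dist z u = 3 ∧ Γ.dist z v = 1 ∧ Γ.dist z w = 3}.ncard ≤ 2 ∧
    {z : {v : α | G.dist x v = 2 ∧ G.dist y v = 2} |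
      Γ.dist z u = 3 ∧ Γ.dist z v = 2 ∧ Γ.dist z w = 3}.ncard ≤ 2 ∧
    {z : {v : α | G.dist x v = 2 ∧ G.dist y v = 2} |
      Γ.dist z u = 3 ∧ Γ.dist z v = 3 ∧ Γ.dist z w = 1}.ncard ≤ 2 ∧
    {z : {v : α | G.dist x v = 2 ∧ G.dist y v = 2} |
      Γ.dist z u = 3 ∧ Γ.dist z v = 3 ∧ Γ.dist z w = 2}.ncard ≤ 2 := by
  subst hΓ
  have key := fun {a b : Moore57.S G x y} (h : (G.induce (Moore57.S G x y)).dist a b = 2) =>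
    Moore57.ncard_dist_three_le_two hG hxy h
  refine ⟨(Set.ncard_le_ncard ?_).trans (key hU), (Set.ncard_le_ncard ?_).trans (key hU),
    (Set.ncard_le_ncard ?_).trans (key hV), (Set.ncard_le_ncard ?_).trans (key hV),
    (Set.ncard_le_ncard ?_).trans (key hW), (Set.ncard_le_ncard ?_).trans (key hW)⟩
  · exact fun z h => ⟨h.2.1, h.2.2⟩
  · exact fun z h => ⟨h.2.1, h.2.2⟩
  · exact fun z h => ⟨h.1, h.2.2⟩
  · exact fun z h => ⟨h.1, h.2.2⟩
  · exact fun z h => ⟨h.1, h.2.1⟩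
  · exact fun z h => ⟨h.1, h.2.1⟩
end

section
/- Let d ≥ 3. There exists a Moore graph of degree d and diameter 2 if and only if there exists a simple graph H with the following properties: (i) H is d-partite, i.e., its vertex set is partitioned into d independent sets (parts); (ii) each part has d − 1 vertices; (iii) every vertex of H has degree d − 1; (iv) each vertex in one part is adjacent to exactly one vertex in any other part; (v) H has no triangles and no 4-cycles. -/
/-!
Fix a root `r` of a Moore graph `G` of degree `d`. Deleting `r` and its `d` neighbours leaves
`d (d - 1)` vertices, and each of them has exactly one neighbour in common with `r`; sorting them
by this neighbour gives the `d` parts of `H`. Conversely, `H` is extended by one new vertex per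
part, joined to the vertices of that part, and by a root joined to these `d` new vertices
(`extendAdj`).

All required properties are immediate from uniqueness of common neighbours, except one: in the
extension of `H`, two nonadjacent vertices `w`, `w'` in different parts must have a common neighbour
(`exists_common`). Let `j` be the part of `w'`, and send each neighbour `x` of `w` to `x` itself
if it lies in part `j`, and otherwise to the neighbour of `x` in part `j`. Since `H` has no
triangles and no 4-cycles this map is injective, from a set of size `d - 1` to another one, hence it
reaches `w'`.
-/

open SimpleGraph

/-- Strong regularity with parameters `(n, d, 0, 1)`, with a conclusion free of decidability and
`Fintype` data. -/
theorem isSRG_moore_iff {V : Type*} [Fintype V] [DecidableEq V] (G : SimpleGraph V)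
    [DecidableRel G.Adj] (n d : ℕ) :
    G.IsSRGWith n d 0 1 ↔ Nat.card V = n ∧ (∀ v, (G.neighborSet v).ncard = d) ∧
      (∀ a b c, G.Adj a b → G.Adj a c → G.Adj b c → False) ∧
      (∀ a b, a ≠ b → ¬ G.Adj a b → ∃! c, G.Adj a c ∧ G.Adj b c) := by
  have hdeg : ∀ v, (G.neighborSet v).ncard = G.degree v := by
    intro v
    rw [Set.ncard_eq_toFinset_card', SimpleGraph.degree, SimpleGraph.neighborFinset]
  have h0 : ∀ a b, Fintype.card (G.commonNeighbors a b) = 0 ↔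
      ∀ c, G.Adj a c → G.Adj b c → False := by
    intro a b
    rw [Fintype.card_eq_zero_iff, Set.isEmpty_coe_sort, Set.eq_empty_iff_forall_notMem]
    simp [SimpleGraph.mem_commonNeighbors]
  have h1 : ∀ a b, Fintype.card (G.commonNeighbors a b) = 1 ↔
      ∃! c, G.Adj a c ∧ G.Adj b c := by
    intro a b
    rw [← Nat.card_eq_fintype_card, Nat.card_coe_set_eq, Set.ncard_eq_one]
    simp only [Set.eq_singleton_iff_unique_mem, SimpleGraph.mem_commonNeighbors]
    rfl
  constructor
  · rintro ⟨hc, hr, ha, hn⟩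
    refine ⟨by rw [Nat.card_eq_fintype_card, hc], fun v => by rw [hdeg, hr v], ?_, ?_⟩
    · intro a b c hab hac hbc
      exact (h0 a b).1 (ha a b hab) c hac hbc
    · intro a b hab hnab
      exact (h1 a b).1 (hn hab hnab)
  · rintro ⟨hc, hr, ha, hn⟩
    refine ⟨by rw [← Nat.card_eq_fintype_card, hc], fun v => by rw [← hdeg, hr v], ?_, ?_⟩
    · intro a b hab
      exact (h0 a b).2 fun c hac hbc => ha a b c hab hac hbc
    · intro a b hab hnab
      exact (h1 a b).2 (hn a b hab hnab)

/-- In a `d`-partite graph as in the theorem, vertices in different parts are adjacent or have a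
common neighbour. -/
theorem exists_common {W ι : Type*} {H : SimpleGraph W} {P : W → ι} {m : ℕ} (hm : m ≠ 0)
    (hcard : ∀ i, {w : W | P w = i}.ncard = m)
    (hdeg : ∀ w, (H.neighborSet w).ncard = m)
    (hiv : ∀ w i, i ≠ P w → ∃! z, P z = i ∧ H.Adj w z)
    (h3 : ¬∃ a b c : W, H.Adj a b ∧ H.Adj b c ∧ H.Adj c a)
    (h4 : ¬∃ a b c e : W, a ≠ c ∧ b ≠ e ∧ H.Adj a b ∧ H.Adj b c ∧ H.Adj c e ∧ H.Adj e a)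
    (w w' : W) (hP : P w' ≠ P w) (hna : ¬ H.Adj w w') : ∃ z, H.Adj w z ∧ H.Adj w' z := by
  have hf : ∀ x, ∃ z, P z = P w' ∧ (z = x ∨ H.Adj x z) := by
    intro x
    by_cases hx : P x = P w'
    · exact ⟨x, hx, Or.inl rfl⟩
    · obtain ⟨z, hz, -⟩ := hiv x (P w') (Ne.symm hx)
      exact ⟨z, hz.1, Or.inr hz.2⟩
  choose f hfP hfA using hf
  have hinj : Set.InjOn f (H.neighborSet w) := by
    intro x hx y hy hxy
    rw [SimpleGraph.mem_neighborSet] at hx hy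
    by_contra hne
    have hwz : w ≠ f x := fun h => hP (by rw [← hfP x, ← h])
    rcases hfA x with h | h <;> rcases hfA y with h' | h'
    · exact hne (h.symm.trans (hxy.trans h'))
    · rw [← hxy, h] at h'
      exact h3 ⟨w, y, x, hy, h', hx.symm⟩
    · rw [hxy, h'] at h
      exact h3 ⟨w, x, y, hx, h, hy.symm⟩
    · rw [← hxy] at h'
      exact h4 ⟨w, x, f x, y, hwz, hne, hx, h, h'.symm, hy.symm⟩
  have himg : f '' H.neighborSet w = {z | P z = P w'} := by
    refine Set.eq_of_subset_of_ncard_le ?_ ?_ ?_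
    · rintro _ ⟨x, -, rfl⟩
      exact hfP x
    · rw [hinj.ncard_image, hcard, hdeg]
    · exact Set.finite_of_ncard_ne_zero (by rw [hcard]; exact hm)
  have hw' : w' ∈ f '' H.neighborSet w := by rw [himg]; rfl
  obtain ⟨x, hx, hxw⟩ := hw'
  rcases hfA x with h | h
  · rw [hxw] at h
    exact absurd (h ▸ hx) hna
  · rw [hxw] at h
    exact ⟨x, hx, h.symm⟩

/-- Adjacency in the extension of `H`: the root is `none`, the new vertex of part `i` is
`some (Sum.inl i)`, and the vertex `w` of `H` is `some (Sum.inr w)`. -/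
def extendAdj {W ι : Type*} (H : SimpleGraph W) (P : W → ι) :
    Option (ι ⊕ W) → Option (ι ⊕ W) → Prop
  | none, some (Sum.inl _) => True
  | some (Sum.inl _), none => True
  | some (Sum.inl i), some (Sum.inr w) => P w = i
  | some (Sum.inr w), some (Sum.inl i) => P w = i
  | some (Sum.inr w), some (Sum.inr w') => H.Adj w w'
  | _, _ => False

/-- The extension of `H` by one vertex per part and a root. -/
def extend {W ι : Type*} (H : SimpleGraph W) (P : W → ι) : SimpleGraph (Option (ι ⊕ W)) where
  Adj := extendAdj H P
  symm := ⟨by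
    rintro (_ | i | w) (_ | j | w') h <;> simp_all [extendAdj, H.adj_comm]⟩
  loopless := ⟨by
    rintro (_ | i | w) h <;> simp_all [extendAdj]⟩

theorem extend_adj {W ι : Type*} (H : SimpleGraph W) (P : W → ι) (a b : Option (ι ⊕ W)) :
    (extend H P).Adj a b ↔ extendAdj H P a b := Iff.rfl

theorem card_of_fibers {W : Type*} {d m : ℕ} (hm : m ≠ 0) (P : W → Fin d)
    (hcard : ∀ i, {w : W | P w = i}.ncard = m) : Finite W ∧ Nat.card W = d * m := by
  have hfib : ∀ i, Finite {w : W // P w = i} := fun i =>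
    (Set.finite_of_ncard_ne_zero (s := {w : W | P w = i}) (by rw [hcard]; exact hm)).to_subtype
  have hfin : Finite W := Finite.of_equiv _ (Equiv.sigmaFiberEquiv P)
  refine ⟨hfin, ?_⟩
  rw [← Nat.card_congr (Equiv.sigmaFiberEquiv P), Nat.card_sigma]
  have : ∀ i, Nat.card {w : W // P w = i} = m := fun i => hcard i
  simp [this]

theorem extend_ncard {W : Type*} {d : ℕ} (hd : 3 ≤ d) (H : SimpleGraph W) (P : W → Fin d)
    [Finite W]
    (hcard : ∀ i : Fin d, {w : W | P w = i}.ncard = d - 1)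
    (hdeg : ∀ w : W, (H.neighborSet w).ncard = d - 1) (v : Option (Fin d ⊕ W)) :
    ((extend H P).neighborSet v).ncard = d := by
  have hinl : Function.Injective fun i : Fin d => (some (Sum.inl i) : Option (Fin d ⊕ W)) :=
    (Option.some_injective _).comp Sum.inl_injective
  have hinr : Function.Injective fun w : W => (some (Sum.inr w) : Option (Fin d ⊕ W)) :=
    (Option.some_injective _).comp Sum.inr_injective
  rcases v with _ | i | w
  · have : (extend H P).neighborSet none = (fun i => some (Sum.inl i)) '' Set.univ := by
      ext (_ | j | x) <;> simp [extend_adj, extendAdj]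
    rw [this, Set.ncard_image_of_injective _ hinl, Set.ncard_univ, Nat.card_fin]
  · have : (extend H P).neighborSet (some (Sum.inl i)) =
        insert none ((fun w => some (Sum.inr w)) '' {w | P w = i}) := by
      ext (_ | j | x) <;> simp [extend_adj, extendAdj]
    rw [this, Set.ncard_insert_of_notMem (by simp) (Set.toFinite _),
      Set.ncard_image_of_injective _ hinr, hcard]
    omega
  · have : (extend H P).neighborSet (some (Sum.inr w)) =
        insert (some (Sum.inl (P w))) ((fun w => some (Sum.inr w)) '' H.neighborSet w) := by
      ext (_ | j | x) <;> simp [extend_adj, extendAdj, eq_comm]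
    rw [this, Set.ncard_insert_of_notMem (by simp) (Set.toFinite _),
      Set.ncard_image_of_injective _ hinr, hdeg]
    omega

theorem extend_existsUnique {W : Type*} {d : ℕ} (hd : 3 ≤ d) (H : SimpleGraph W) (P : W → Fin d)
    (hi : ∀ a b : W, H.Adj a b → P a ≠ P b)
    (hcard : ∀ i : Fin d, {w : W | P w = i}.ncard = d - 1)
    (hdeg : ∀ w : W, (H.neighborSet w).ncard = d - 1)
    (hiv : ∀ w : W, ∀ i : Fin d, i ≠ P w → ∃! z : W, P z = i ∧ H.Adj w z)
    (h3 : ¬∃ a b c : W, H.Adj a b ∧ H.Adj b c ∧ H.Adj c a)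
    (h4 : ¬∃ a b c e : W, a ≠ c ∧ b ≠ e ∧ H.Adj a b ∧ H.Adj b c ∧ H.Adj c e ∧ H.Adj e a)
    (a b : Option (Fin d ⊕ W)) (hab : a ≠ b) (hn : ¬ (extend H P).Adj a b) :
    ∃! c, (extend H P).Adj a c ∧ (extend H P).Adj b c := by
  have key1 : ∀ i w, i ≠ P w →
      ∃! c, (extend H P).Adj (some (Sum.inl i)) c ∧ (extend H P).Adj (some (Sum.inr w)) c := by
    intro i w hiw
    obtain ⟨z, ⟨hz1, hz2⟩, hu⟩ := hiv w i hiw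
    refine ⟨some (Sum.inr z), ⟨hz1, hz2⟩, ?_⟩
    rintro (_ | j | x) ⟨hx1, hx2⟩
    · exact hx2.elim
    · exact hx1.elim
    · rw [hu x ⟨hx1, hx2⟩]
  have key2 : ∀ w, ∃! c, (extend H P).Adj none c ∧ (extend H P).Adj (some (Sum.inr w)) c := by
    intro w
    refine ⟨some (Sum.inl (P w)), ⟨trivial, rfl⟩, ?_⟩
    rintro (_ | j | x) ⟨hx1, hx2⟩
    · exact hx1.elim
    · rw [show P w = j from hx2]
    · exact hx1.elim
  have hsymm : ∀ a b, (∃! c, (extend H P).Adj a c ∧ (extend H P).Adj b c) →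
      ∃! c, (extend H P).Adj b c ∧ (extend H P).Adj a c := by
    intro a b h
    simpa only [and_comm] using h
  rcases a with _ | i | w <;> rcases b with _ | j | w'
  · exact absurd rfl hab
  · exact absurd trivial hn
  · exact key2 w'
  · exact absurd trivial hn
  · have hij : i ≠ j := fun h => hab (by rw [h])
    refine ⟨none, ⟨trivial, trivial⟩, ?_⟩
    rintro (_ | k | x) ⟨hx1, hx2⟩
    · rfl
    · exact hx1.elim
    · exact absurd ((show P x = i from hx1).symm.trans hx2) hij
  · exact key1 i w' fun h => hn h.symm
  · exact hsymm _ _ (key2 w)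
  · exact hsymm _ _ (key1 j w fun h => hn h.symm)
  · have hne : w ≠ w' := fun h => hab (by rw [h])
    have hna : ¬ H.Adj w w' := hn
    by_cases hP : P w' = P w
    · refine ⟨some (Sum.inl (P w)), ⟨rfl, hP⟩, ?_⟩
      rintro (_ | k | x) ⟨hx1, hx2⟩
      · exact hx1.elim
      · rw [show P w = k from hx1]
      · have hx1 : H.Adj w x := hx1
        have hx2 : H.Adj w' x := hx2
        -- a vertex of `H` has at most one neighbour in the part shared by the two vertices
        exact absurd ((hiv x (P w) (hi _ _ hx1)).unique ⟨rfl, hx1.symm⟩ ⟨hP, hx2.symm⟩) hne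
    · obtain ⟨z, hz1, hz2⟩ :=
        exists_common (by omega) hcard hdeg hiv h3 h4 w w' hP hna
      refine ⟨some (Sum.inr z), ⟨hz1, hz2⟩, ?_⟩
      rintro (_ | k | x) ⟨hx1, hx2⟩
      · exact hx1.elim
      · exact absurd ((show P w' = k from hx2).trans (show P w = k from hx1).symm) hP
      · have hx1 : H.Adj w x := hx1
        have hx2 : H.Adj w' x := hx2
        by_contra hxz
        exact h4 ⟨w, x, w', z, hne, fun h => hxz (by rw [h]), hx1, hx2.symm, hz2, hz1.symm⟩

theorem moore_of_partite (d : ℕ) (hd : 3 ≤ d) {W : Type} (H : SimpleGraph W) (P : W → Fin d)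
    (hi : ∀ a b : W, H.Adj a b → P a ≠ P b)
    (hcard : ∀ i : Fin d, {w : W | P w = i}.ncard = d - 1)
    (hdeg : ∀ w : W, (H.neighborSet w).ncard = d - 1)
    (hiv : ∀ w : W, ∀ i : Fin d, i ≠ P w → ∃! z : W, P z = i ∧ H.Adj w z)
    (h3 : ¬∃ a b c : W, H.Adj a b ∧ H.Adj b c ∧ H.Adj c a)
    (h4 : ¬∃ a b c e : W, a ≠ c ∧ b ≠ e ∧ H.Adj a b ∧ H.Adj b c ∧ H.Adj c e ∧ H.Adj e a) :
    ∃ G : SimpleGraph (Fin (d ^ 2 + 1)), ∃ _ : DecidableRel G.Adj,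
        G.IsSRGWith (d ^ 2 + 1) d 0 1 := by
  classical
  obtain ⟨hfin, hW⟩ := card_of_fibers (by omega) P hcard
  have hV : Nat.card (Option (Fin d ⊕ W)) = d ^ 2 + 1 := by
    rw [Finite.card_option, Nat.card_sum, hW, Nat.card_fin]
    obtain ⟨k, rfl⟩ : ∃ k, d = k + 1 := ⟨d - 1, by omega⟩
    simp only [Nat.add_sub_cancel]
    ring
  let e : Fin (d ^ 2 + 1) ≃ Option (Fin d ⊕ W) := (Finite.equivFinOfCardEq hV).symm
  refine ⟨(extend H P).comap e, Classical.decRel _, ?_⟩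
  let _ := Classical.decRel ((extend H P).comap e).Adj
  refine (isSRG_moore_iff _ _ _).2 ⟨Nat.card_fin _, ?_, ?_, ?_⟩
  · intro v
    have : ((extend H P).comap e).neighborSet v = e ⁻¹' (extend H P).neighborSet (e v) := rfl
    rw [this, Set.ncard_preimage_of_injective_subset_range e.injective (by simp),
      extend_ncard hd H P hcard hdeg]
  · intro a b c
    simp only [SimpleGraph.comap_adj]
    generalize e a = a
    generalize e b = b
    generalize e c = c
    intro hab hac hbc
    rcases a with _ | i | w <;> rcases b with _ | j | w' <;> rcases c with _ | k | w'' <;>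
      simp only [extend_adj, extendAdj] at hab hac hbc
    · exact hi _ _ hbc (hab.trans hac.symm)
    · exact hi _ _ hac (hab.trans hbc.symm)
    · exact hi _ _ hab (hac.trans hbc.symm)
    · exact h3 ⟨_, _, _, hab, hbc, hac.symm⟩
  · intro a b hab hn
    obtain ⟨c, hc, hu⟩ := extend_existsUnique hd H P hi hcard hdeg hiv h3 h4 (e a) (e b)
      (e.injective.ne hab) hn
    refine ⟨e.symm c, by simpa using hc, fun y hy => ?_⟩
    rw [Equiv.eq_symm_apply]
    exact hu _ hy

/-- `H` is the subgraph induced on the non-neighbours of `r` other than `r` itself; the part of a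
vertex is given by its unique common neighbour with `r`. -/
theorem partite_of_moore (d : ℕ) {V : Type} (G : SimpleGraph V) [Finite V] (r : V)
    (hreg : ∀ v, (G.neighborSet v).ncard = d)
    (htri : ∀ a b c, G.Adj a b → G.Adj a c → G.Adj b c → False)
    (hcom : ∀ a b, a ≠ b → ¬ G.Adj a b → ∃! c, G.Adj a c ∧ G.Adj b c) :
    ∃ (W : Type) (H : SimpleGraph W) (P : W → Fin d),
      (∀ a b : W, H.Adj a b → P a ≠ P b) ∧
      (∀ i : Fin d, {w : W | P w = i}.ncard = d - 1) ∧
      (∀ w : W, (H.neighborSet w).ncard = d - 1) ∧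
      (∀ w : W, ∀ i : Fin d, i ≠ P w → ∃! z : W, P z = i ∧ H.Adj w z) ∧
      (¬∃ a b c : W, H.Adj a b ∧ H.Adj b c ∧ H.Adj c a) ∧
      (¬∃ a b c e : W, a ≠ c ∧ b ≠ e ∧ H.Adj a b ∧ H.Adj b c ∧ H.Adj c e ∧ H.Adj e a) := by
  let N := G.neighborSet r
  let W := {v : V // r ≠ v ∧ ¬ G.Adj r v}
  let e : N ≃ Fin d := Finite.equivFinOfCardEq (hreg r)
  choose p hp hpu using fun w : W => hcom r w w.2.1 w.2.2
  let P : W → Fin d := fun w => e ⟨p w, (hp w).1⟩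
  -- the part of `w` is `i` exactly when `w` is adjacent to the `i`-th neighbour of `r`
  have hPiff : ∀ w i, P w = i ↔ G.Adj (e.symm i : V) w := by
    intro w i
    rw [← Equiv.eq_symm_apply]
    constructor
    · intro h
      rw [← h]
      exact (hp w).2.symm
    · intro h
      exact Subtype.ext (hpu w _ ⟨(e.symm i).2, h.symm⟩).symm
  have hPadj : ∀ w : W, G.Adj (e.symm (P w) : V) w := fun w => (hPiff w _).1 rfl
  have hN : ∀ i, G.Adj r (e.symm i : V) := fun i => (e.symm i).2
  have hinj : Function.Injective (Subtype.val : W → V) := Subtype.val_injective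
  refine ⟨W, G.comap Subtype.val, P, ?_, ?_, ?_, ?_, ?_, ?_⟩
  · intro a b hab h
    exact htri _ _ _ (hPadj a) (by rw [h]; exact hPadj b) hab
  · intro i
    have : G.neighborSet (e.symm i : V) \ {r} = Subtype.val '' {w : W | P w = i} := by
      ext v
      constructor
      · rintro ⟨hv, hvr⟩
        have hrv : ¬ G.Adj r v := fun h => htri _ _ _ (hN i) h hv
        exact ⟨⟨v, Ne.symm hvr, hrv⟩, (hPiff _ _).2 hv, rfl⟩
      · rintro ⟨w, hw, rfl⟩
        exact ⟨(hPiff _ _).1 hw, Ne.symm w.2.1⟩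
    rw [← Set.ncard_image_of_injective _ hinj, ← this,
      Set.ncard_sdiff_singleton_of_mem ((G.mem_neighborSet _ _).2 (hN i).symm), hreg]
  · intro w
    have : G.neighborSet (w : V) \ {(e.symm (P w) : V)} =
        Subtype.val '' (G.comap (Subtype.val : W → V)).neighborSet w := by
      ext v
      constructor
      · rintro ⟨hv, hvp⟩
        have hrv : r ≠ v := by
          rintro rfl
          exact w.2.2 (SimpleGraph.Adj.symm hv)
        have hnrv : ¬ G.Adj r v := by
          intro h
          refine hvp ?_
          have := hpu w v ⟨h, hv⟩
          simp [P, this]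
        exact ⟨⟨v, hrv, hnrv⟩, hv, rfl⟩
      · rintro ⟨x, hx, rfl⟩
        refine ⟨hx, fun h => ?_⟩
        have h : (x : V) = _ := h
        exact x.2.2 (h ▸ hN _)
    rw [← Set.ncard_image_of_injective _ hinj, ← this,
      Set.ncard_sdiff_singleton_of_mem ((G.mem_neighborSet _ _).2 (hPadj w).symm), hreg]
  · intro w i hiw
    have hna : ¬ G.Adj (e.symm i : V) w := fun h => hiw ((hPiff w i).2 h).symm
    have hne : (e.symm i : V) ≠ w := fun h => w.2.2 (h ▸ hN i)
    obtain ⟨z, ⟨hz1, hz2⟩, hu⟩ := hcom _ _ hne hna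
    have hrz : r ≠ z := by
      rintro rfl
      exact w.2.2 hz2.symm
    have hnrz : ¬ G.Adj r z := fun h => htri _ _ _ (hN i) h hz1
    refine ⟨⟨z, hrz, hnrz⟩, ⟨(hPiff _ _).2 hz1, hz2⟩, ?_⟩
    rintro y ⟨hy1, hy2⟩
    exact Subtype.ext (hu y ⟨(hPiff _ _).1 hy1, hy2⟩)
  · rintro ⟨a, b, c, hab, hbc, hca⟩
    exact htri _ _ _ hab hca.symm hbc
  · rintro ⟨a, b, c, x, hac, hbx, hab, hbc, hcx, hxa⟩
    have hnac : ¬ G.Adj (a : V) c := fun h => htri _ _ _ hab h hbc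
    exact hbx (Subtype.ext ((hcom a c (hinj.ne hac) hnac).unique
      ⟨hab, hbc.symm⟩ ⟨hxa.symm, hcx⟩))

/-- Theorem 4. For `d ≥ 3`, a Moore graph of degree `d` and diameter 2
(i.e. a strongly regular graph with parameters `(d² + 1, d, 0, 1)`) exists if and only if there
is a simple graph `H` together with a partition of its vertices into `d` parts (the fibers of
`P : W → Fin d`) such that: (i) each part is an independent set; (ii) each part has `d - 1`
vertices; (iii) every vertex has degree `d - 1`; (iv) every vertex is adjacent to exactly one
vertex of each other part; (v) `H` has no triangles and no 4-cycles. -/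
theorem moore_exists_iff_H_exists (d : ℕ) (hd : 3 ≤ d) :
    (∃ G : SimpleGraph (Fin (d ^ 2 + 1)), ∃ _ : DecidableRel G.Adj,
        G.IsSRGWith (d ^ 2 + 1) d 0 1) ↔
    ∃ (W : Type) (H : SimpleGraph W) (P : W → Fin d),
      (∀ a b : W, H.Adj a b → P a ≠ P b) ∧
      (∀ i : Fin d, {w : W | P w = i}.ncard = d - 1) ∧
      (∀ w : W, (H.neighborSet w).ncard = d - 1) ∧
      (∀ w : W, ∀ i : Fin d, i ≠ P w → ∃! z : W, P z = i ∧ H.Adj w z) ∧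
      (¬∃ a b c : W, H.Adj a b ∧ H.Adj b c ∧ H.Adj c a) ∧
      (¬∃ a b c e : W, a ≠ c ∧ b ≠ e ∧ H.Adj a b ∧ H.Adj b c ∧ H.Adj c e ∧ H.Adj e a) := by
  constructor
  · rintro ⟨G, hdec, hG⟩
    obtain ⟨-, hreg, htri, hcom⟩ := (isSRG_moore_iff G _ _).1 hG
    exact partite_of_moore d G 0 hreg htri hcom
  · rintro ⟨W, H, P, hi, hcard, hdeg, hiv, h3, h4⟩
    exact moore_of_partite d hd H P hi hcard hdeg hiv h3 h4
end

section
/- Let M be the 27 × 27 integer matrix obtained by stacking vertically the three Kronecker products r ⊗ I₃ ⊗ I₃, I₃ ⊗ r ⊗ I₃, and I₃ ⊗ I₃ ⊗ r, where I₃ is the 3 × 3 identity matrix and r = (1, 1, 1). Let x_p = (0,0,0,0,53,1,0,1,0,0,53,1,53,2756,53,1,53,0,0,1,0,1,53,0,0,0,53) ∈ ℤ²⁷. Then x_p is the unique vector x ∈ ℤ²⁷ with all coordinates nonnegative satisfying M x = M x_p and x₂₇ = 53; i.e., the set of such vectors has exactly 1 element. -/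
/-!
The rows of `M x` are the 27 line sums of the `3 × 3 × 3` array `x i j k`, so a solution has the
same line sums as `x_p` in each of the three directions. Line sums equal to zero force, by
nonnegativity, every entry on the lines `(1,1,*)`, `(1,*,1)` and `(*,1,1)` to vanish. The three
lines through `(3,3,3)` have sum 53, which is already used up by `x 3 3 3 = 53`, so their other
entries vanish too. Every remaining entry is then determined by line sums alone.
-/

open Matrix Kronecker

/-- The 1 × 3 all-ones row vector `r = (1, 1, 1)`. -/
def rOnes : Matrix (Fin 1) (Fin 3) ℤ := Matrix.of fun _ _ => 1

/-- Lexicographic identification of index triples `(i₁, i₂, i₃)` with `Fin 27`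
(first coordinate most significant), matching the lexicographic ordering of the triples
`(i₁, i₂, i₃) ∈ {1, 2, 3}³` used to index the 27 coordinates. -/
def colEquiv : (Fin 3 × Fin 3) × Fin 3 ≃ Fin 27 :=
  (Equiv.prodCongr finProdFinEquiv (Equiv.refl (Fin 3))).trans finProdFinEquiv

def rowEquiv1 : (Fin 1 × Fin 3) × Fin 3 ≃ Fin 9 :=
  (Equiv.prodCongr finProdFinEquiv (Equiv.refl (Fin 3))).trans finProdFinEquiv

def rowEquiv2 : (Fin 3 × Fin 1) × Fin 3 ≃ Fin 9 :=
  (Equiv.prodCongr finProdFinEquiv (Equiv.refl (Fin 3))).trans finProdFinEquiv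

def rowEquiv3 : (Fin 3 × Fin 3) × Fin 1 ≃ Fin 9 :=
  (Equiv.prodCongr finProdFinEquiv (Equiv.refl (Fin 1))).trans finProdFinEquiv

/-- The 27 × 27 matrix obtained by stacking vertically the three Kronecker products
`r ⊗ I₃ ⊗ I₃`, `I₃ ⊗ r ⊗ I₃` and `I₃ ⊗ I₃ ⊗ r`, where `I₃` is the 3 × 3 identity matrix and
`r = (1, 1, 1)` is the 1 × 3 all-ones row, with columns indexed lexicographically by triples. -/
def M : Matrix (Fin 27) (Fin 27) ℤ :=
  Matrix.reindex
    ((rowEquiv1.sumCongr (rowEquiv2.sumCongr rowEquiv3)).trans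
      (((Equiv.refl (Fin 9)).sumCongr finSumFinEquiv).trans finSumFinEquiv))
    colEquiv
    (Matrix.fromRows
      (rOnes ⊗ₖ (1 : Matrix (Fin 3) (Fin 3) ℤ) ⊗ₖ (1 : Matrix (Fin 3) (Fin 3) ℤ))
      (Matrix.fromRows
        ((1 : Matrix (Fin 3) (Fin 3) ℤ) ⊗ₖ rOnes ⊗ₖ (1 : Matrix (Fin 3) (Fin 3) ℤ))
        ((1 : Matrix (Fin 3) (Fin 3) ℤ) ⊗ₖ (1 : Matrix (Fin 3) (Fin 3) ℤ) ⊗ₖ rOnes)))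

/-- The particular solution of block 333 (coordinates indexed lexicographically by triples,
coordinate 27 corresponding to (3,3,3)). -/
def xp : Fin 27 → ℤ := ![0,0,0,0,53,1,0,1,0,0,53,1,53,2756,53,1,53,0,0,1,0,1,53,0,0,0,53]

/-- The numbering of the 27 rows of `M`, three stacked blocks of nine rows each. -/
def rowIndex :
    ((Fin 1 × Fin 3) × Fin 3) ⊕ (((Fin 3 × Fin 1) × Fin 3) ⊕ ((Fin 3 × Fin 3) × Fin 1)) ≃ Fin 27 :=
  (rowEquiv1.sumCongr (rowEquiv2.sumCongr rowEquiv3)).trans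
    (((Equiv.refl (Fin 9)).sumCongr finSumFinEquiv).trans finSumFinEquiv)

/-- A row of `M x` as a sum over triples rather than over `Fin 27`. -/
lemma mulVec_rowIndex (x : Fin 27 → ℤ)
    (s : ((Fin 1 × Fin 3) × Fin 3) ⊕ (((Fin 3 × Fin 1) × Fin 3) ⊕ ((Fin 3 × Fin 3) × Fin 1))) :
    M.mulVec x (rowIndex s) = ∑ c, M (rowIndex s) (colEquiv c) * x (colEquiv c) :=
  (Equiv.sum_comp colEquiv fun c => M (rowIndex s) c * x c).symm

lemma M_rowIndex
    (s : ((Fin 1 × Fin 3) × Fin 3) ⊕ (((Fin 3 × Fin 1) × Fin 3) ⊕ ((Fin 3 × Fin 3) × Fin 1)))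
    (c : (Fin 3 × Fin 3) × Fin 3) :
    M (rowIndex s) (colEquiv c) = Matrix.fromRows
      (rOnes ⊗ₖ (1 : Matrix (Fin 3) (Fin 3) ℤ) ⊗ₖ (1 : Matrix (Fin 3) (Fin 3) ℤ))
      (Matrix.fromRows
        ((1 : Matrix (Fin 3) (Fin 3) ℤ) ⊗ₖ rOnes ⊗ₖ (1 : Matrix (Fin 3) (Fin 3) ℤ))
        ((1 : Matrix (Fin 3) (Fin 3) ℤ) ⊗ₖ (1 : Matrix (Fin 3) (Fin 3) ℤ) ⊗ₖ rOnes)) s c := by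
  -- `M` is a reindexing along `rowIndex` and `colEquiv`, hence evaluates through their inverses.
  change Matrix.fromRows _ _ (rowIndex.symm (rowIndex s)) (colEquiv.symm (colEquiv c)) = _
  rw [Equiv.symm_apply_apply, Equiv.symm_apply_apply]

/-- The rows of `M x` coming from `r ⊗ I₃ ⊗ I₃` are the line sums in the first direction. -/
lemma mulVec_row1 (x : Fin 27 → ℤ) (j k : Fin 3) :
    M.mulVec x (rowIndex (Sum.inl ((0, j), k))) = ∑ i, x (colEquiv ((i, j), k)) := by
  rw [mulVec_rowIndex]
  simp [M_rowIndex, Fintype.sum_prod_type, Matrix.kroneckerMap_apply, rOnes, Matrix.one_apply]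

/-- The rows of `M x` coming from `I₃ ⊗ r ⊗ I₃` are the line sums in the second direction. -/
lemma mulVec_row2 (x : Fin 27 → ℤ) (i k : Fin 3) :
    M.mulVec x (rowIndex (Sum.inr (Sum.inl ((i, 0), k)))) = ∑ j, x (colEquiv ((i, j), k)) := by
  rw [mulVec_rowIndex]
  simp [M_rowIndex, Fintype.sum_prod_type, Matrix.kroneckerMap_apply, rOnes, Matrix.one_apply]
  rw [Finset.sum_comm]
  simp

/-- The rows of `M x` coming from `I₃ ⊗ I₃ ⊗ r` are the line sums in the third direction. -/
lemma mulVec_row3 (x : Fin 27 → ℤ) (i j : Fin 3) :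
    M.mulVec x (rowIndex (Sum.inr (Sum.inr ((i, j), 0)))) = ∑ k, x (colEquiv ((i, j), k)) := by
  rw [mulVec_rowIndex]
  simp [M_rowIndex, Fintype.sum_prod_type, Matrix.kroneckerMap_apply, rOnes, Matrix.one_apply,
    ite_and]

/-- The vector `x_p` written as a `3 × 3 × 3` array. -/
lemma xp_colEquiv (i j k : Fin 3) : xp (colEquiv ((i, j), k)) =
    ![![![0, 0, 0], ![0, 53, 1], ![0, 1, 0]],
      ![![0, 53, 1], ![53, 2756, 53], ![1, 53, 0]],
      ![![0, 1, 0], ![1, 53, 0], ![0, 0, 53]]] i j k := by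
  revert i j k
  decide

lemma eq_xp_of_mulVec_eq (x : Fin 27 → ℤ) (h0 : ∀ i, 0 ≤ x i)
    (hM : M.mulVec x = M.mulVec xp) (h26 : x 26 = 53) : x = xp := by
  obtain ⟨y, hy⟩ : ∃ y : Fin 3 → Fin 3 → Fin 3 → ℤ, ∀ i j k, x (colEquiv ((i, j), k)) = y i j k :=
    ⟨_, fun _ _ _ => rfl⟩
  have h1 (j k : Fin 3) : ∑ i, x (colEquiv ((i, j), k)) = ∑ i, xp (colEquiv ((i, j), k)) := by
    rw [← mulVec_row1, hM, mulVec_row1]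
  have h2 (i k : Fin 3) : ∑ j, x (colEquiv ((i, j), k)) = ∑ j, xp (colEquiv ((i, j), k)) := by
    rw [← mulVec_row2, hM, mulVec_row2]
  have h3 (i j : Fin 3) : ∑ k, x (colEquiv ((i, j), k)) = ∑ k, xp (colEquiv ((i, j), k)) := by
    rw [← mulVec_row3, hM, mulVec_row3]
  have hnonneg (i j k : Fin 3) : 0 ≤ y i j k := hy i j k ▸ h0 _
  have hlast : y 2 2 2 = 53 := by
    rw [← hy, ← h26]
    rfl
  suffices h : ∀ i j k, y i j k = xp (colEquiv ((i, j), k)) by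
    funext n
    obtain ⟨⟨⟨i, j⟩, k⟩, rfl⟩ := colEquiv.surjective n
    rw [hy, h]
  simp only [hy, xp_colEquiv] at h1 h2 h3 ⊢
  simp [Fin.forall_fin_succ, Fin.sum_univ_three] at h1 h2 h3 hnonneg ⊢
  omega

/-- `x_p` is the unique nonnegative integer vector `x` with
`M x = M x_p` and `x₂₇ = 53` (block 333); i.e., this solution set is `{x_p}`, and in
particular it has exactly 1 element. -/
theorem block333_unique_solution :
    {x : Fin 27 → ℤ | (∀ i, 0 ≤ x i) ∧ M.mulVec x = M.mulVec xp ∧ x 26 = 53} = {xp} ∧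
    {x : Fin 27 → ℤ | (∀ i, 0 ≤ x i) ∧ M.mulVec x = M.mulVec xp ∧ x 26 = 53}.ncard = 1 := by
  have h : {x : Fin 27 → ℤ | (∀ i, 0 ≤ x i) ∧ M.mulVec x = M.mulVec xp ∧ x 26 = 53} = {xp} := by
    ext x
    constructor
    · rintro ⟨h0, hM, h26⟩
      exact eq_xp_of_mulVec_eq x h0 hM h26
    · rintro rfl
      exact ⟨by decide, rfl, rfl⟩
  exact ⟨h, by rw [h, Set.ncard_singleton]⟩
end
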